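/- Unfolding of useful abstractions: if ufabs(p) then unf(p) is a value (an abstraction λx.t). -/

import Mathlib

/-! ## Terms of the pure λ-calculus (named syntax) -/

inductive Term : Type
  | var : ℕ → Term
  | lam : ℕ → Term → Term
  | app : Term → Term → Term
  deriving DecidableEq

namespace Term

/-- Size of a term: |x| = 1, |λx.t| = |t|+1, |t u| = |t|+|u|+1. -/
def size : Term → ℕ
  | var _ => 1
  | lam _ t => size t + 1
  | app t u => size t + size u + 1

/-- Free variables of a term. -/
def fv : Term → Finset ℕ
  | var x => {x}
  | lam x t => (fv t).erase x
  | app t u => fv t ∪ fv u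

/-- Meta-level substitution t{x←u}. -/
def subst (x : ℕ) (u : Term) : Term → Term
  | var y => if y = x then u else var y
  | lam y t => if y = x then lam y t else lam y (subst x u t)
  | app t s => app (subst x u t) (subst x u s)

def isVarB : Term → Bool
  | var _ => true
  | _ => false

/-- Values are abstractions (variables are not values). -/
def IsValue (t : Term) : Prop := ∃ x u, t = lam x u

/-- Needed variables of a term. -/
def nv : Term → Finset ℕ
  | var x => {x}
  | lam _ _ => ∅
  | app t u => nv t ∪ nv u

/-- Applied variables of a term. -/
def anv : Term → Finset ℕ
  | var _ => ∅
  | lam _ _ => ∅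
  | app (var x) u => insert x (anv u)
  | app (lam y t) u => anv (lam y t) ∪ anv u
  | app (app t s) u => anv (app t s) ∪ anv u

/-- Unapplied variables of a term. -/
def unv : Term → Finset ℕ
  | var x => {x}
  | lam _ _ => ∅
  | app (var _) u => unv u
  | app (lam y t) u => unv (lam y t) ∪ unv u
  | app (app t s) u => unv (app t s) ∪ unv u

end Term

/-! ## Inert terms and fireballs: i ::= x | i f,  f ::= v | i -/

mutual
  inductive Term.Inert : Term → Prop
    | var (x : ℕ) : Term.Inert (Term.var x)
    | app {i f : Term} : Term.Inert i → Term.Fireball f → Term.Inert (Term.app i f)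
  inductive Term.Fireball : Term → Prop
    | val {x : ℕ} {t : Term} : Term.Fireball (Term.lam x t)
    | inert {i : Term} : Term.Inert i → Term.Fireball i
end

/-- Non-variable inert terms i⁺. -/
def Term.InertPlus (t : Term) : Prop := t.Inert ∧ ∀ x, t ≠ Term.var x

/-! ## β-reduction (closure of the root rule under arbitrary term contexts) -/

inductive Beta : Term → Term → Prop
  | beta (x : ℕ) (t u : Term) : Beta (Term.app (Term.lam x t) u) (Term.subst x u t)
  | lam {t t' : Term} (x : ℕ) : Beta t t' → Beta (Term.lam x t) (Term.lam x t')
  | appL {t t' : Term} (u : Term) : Beta t t' → Beta (Term.app t u) (Term.app t' u)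
  | appR {u u' : Term} (t : Term) : Beta u u' → Beta (Term.app t u) (Term.app t u')

/-- `iterRel R n a b`: an n-step R-reduction sequence from a to b. -/
def iterRel {α : Type} (R : α → α → Prop) : ℕ → α → α → Prop
  | 0 => Eq
  | n + 1 => fun a c => ∃ b, R a b ∧ iterRel R n b c

/-! ## Environments and programs -/

/-- Environments are finite lists of explicit substitutions, written
left-to-right, i.e. E[x←t] is `E ++ [(x, t)]`. -/
abbrev Env := List (ℕ × Term)

def Env.dom (E : Env) : Finset ℕ := (E.map Prod.fst).toFinset

/-- Content of the leftmost explicit substitution on x. -/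
def Env.lookupES : Env → ℕ → Option Term
  | [], _ => none
  | (y, t) :: E, x => if y = x then some t else Env.lookupES E x

structure Program where
  tm : Term
  env : Env

/-- p@[x←u] : appending an explicit substitution at the end of the environment. -/
def Program.appES (p : Program) (x : ℕ) (u : Term) : Program := ⟨p.tm, p.env ++ [(x, u)]⟩

/-- One step of the needed-variables computation along an explicit substitution. -/
def nvStep (V : Finset ℕ) (e : ℕ × Term) : Finset ℕ :=
  if e.1 ∈ V then (V.erase e.1) ∪ Term.nv e.2 else V

/-- Needed variables of a program. -/
def Program.nv (p : Program) : Finset ℕ := p.env.foldl nvStep p.tm.nv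

/-- One step of the applied-variables computation (carrying needed variables). -/
def anvStep : Finset ℕ × Finset ℕ → ℕ × Term → Finset ℕ × Finset ℕ
  | (N, A), (x, u) =>
    (nvStep N (x, u),
      if x ∈ N then
        match u with
        | Term.var y => if x ∈ A then (A.erase x) ∪ {y} else A.erase x
        | _ => (A.erase x) ∪ Term.anv u
      else A)

/-- Applied variables of a program. -/
def Program.anv (p : Program) : Finset ℕ :=
  (p.env.foldl anvStep (p.tm.nv, p.tm.anv)).2

/-- One step of the unapplied-variables computation (carrying needed variables). -/
def unvStep : Finset ℕ × Finset ℕ → ℕ × Term → Finset ℕ × Finset ℕ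
  | (N, U), (x, u) =>
    (nvStep N (x, u),
      if x ∈ U ∨ (x ∈ N ∧ u.isVarB = false) then (U.erase x) ∪ Term.unv u else U)

/-- Unapplied variables of a program. -/
def Program.unv (p : Program) : Finset ℕ :=
  (p.env.foldl unvStep (p.tm.nv, p.tm.unv)).2

/-- Unfolding of a program into a term: unf(t, ε) = t, unf(t, E[x←u]) = unf(t, E){x←u}. -/
def Program.unf (p : Program) : Term :=
  p.env.foldl (fun s e => Term.subst e.1 e.2 s) p.tm

/-! ## Term contexts H ::= ⟨·⟩ | H t | i H (i inert, enforced by WF) -/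

inductive HCtx : Type
  | hole : HCtx
  | appL : HCtx → Term → HCtx
  | appR : Term → HCtx → HCtx

namespace HCtx

/-- Well-formedness: in i H, the left part i must be an inert term. -/
def WF : HCtx → Prop
  | hole => True
  | appL H _ => WF H
  | appR i H => Term.Inert i ∧ WF H

def plug : HCtx → Term → Term
  | hole, t => t
  | appL H u, t => Term.app (plug H t) u
  | appR i H, t => Term.app i (plug H t)

def nv : HCtx → Finset ℕ
  | hole => ∅
  | appL H _ => nv H
  | appR i H => Term.nv i ∪ nv H

def anv : HCtx → Finset ℕ
  | hole => ∅
  | appL H _ => anv H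
  | appR i H => Term.anv i ∪ anv H

def unv : HCtx → Finset ℕ
  | hole => ∅
  | appL H _ => unv H
  | appR i H => Term.unv i ∪ unv H

end HCtx

/-- Applicative term contexts H@ ::= ⟨·⟩ t | H@ t | i H@. -/
inductive HCtx.IsApp : HCtx → Prop
  | base (t : Term) : HCtx.IsApp (HCtx.appL HCtx.hole t)
  | appL {H : HCtx} (t : Term) : HCtx.IsApp H → HCtx.IsApp (HCtx.appL H t)
  | appR {H : HCtx} {i : Term} : Term.Inert i → HCtx.IsApp H → HCtx.IsApp (HCtx.appR i H)

/-! ## Program contexts: hole in the term part (tc) or inside an ES (ec) -/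

inductive PCtx : Type
  | tc : HCtx → Env → PCtx
  | ec : Term → Env → ℕ → HCtx → Env → PCtx

namespace PCtx

/-- P@[x←u] : appending an explicit substitution at the end of the environment of P. -/
def appES : PCtx → ℕ → Term → PCtx
  | tc H E, x, u => tc H (E ++ [(x, u)])
  | ec t E1 y H E2, x, u => ec t E1 y H (E2 ++ [(x, u)])

/-- Plugging a term into a program context. -/
def plugT : PCtx → Term → Program
  | tc H E, t => ⟨H.plug t, E⟩
  | ec u E1 x H E2, t => ⟨u, E1 ++ (x, H.plug t) :: E2⟩

/-- Plugging a program into a program context: the plugged environment is appended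
right after the position of the hole. -/
def plugP : PCtx → Program → Program
  | tc H E, q => ⟨H.plug q.tm, q.env ++ E⟩
  | ec u E1 x H E2, q => ⟨u, E1 ++ (x, H.plug q.tm) :: (q.env ++ E2)⟩

/-- Variables bound by the environment of P. -/
def dom : PCtx → Finset ℕ
  | tc _ E => Env.dom E
  | ec _ E1 y _ E2 => insert y (Env.dom E1 ∪ Env.dom E2)

/-- P(x): content of the leftmost explicit substitution on x occurring after the hole. -/
def lookup : PCtx → ℕ → Option Term
  | tc _ E, x => Env.lookupES E x
  | ec _ _ _ _ E2, x => Env.lookupES E2 x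

/-- (P⟨x⟩)@[x←H] : plug the variable x in the hole of P and append the ES [x←H],
whose content H now contains the hole. -/
def hered (P : PCtx) (x : ℕ) (H : HCtx) : PCtx :=
  ec (P.plugT (Term.var x)).tm (P.plugT (Term.var x)).env x H []

end PCtx

/-! ## Open CbNeed evaluation contexts P ∈ E_V -/

inductive OEC : PCtx → Finset ℕ → Prop
  | ax {H : HCtx} : H.WF → OEC (PCtx.tc H []) H.nv
  | gc {P : PCtx} {V : Finset ℕ} {x : ℕ} (t : Term) :
      OEC P V → x ∉ V → x ∉ P.dom → OEC (P.appES x t) V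
  | inert {P : PCtx} {V : Finset ℕ} {x : ℕ} {i : Term} :
      OEC P V → x ∈ V → Term.Inert i → x ∉ P.dom →
      OEC (P.appES x i) ((V.erase x) ∪ i.nv)
  | her {P : PCtx} {V : Finset ℕ} {x : ℕ} {H : HCtx} :
      OEC P V → x ∉ V → x ∉ P.dom → H.WF →
      OEC (P.hered x H) (V ∪ H.nv)

/-! ## Open CbNeed reduction -/

inductive StepOM : Program → Program → Prop
  | mk {P : PCtx} {V : Finset ℕ} {x : ℕ} {t u : Term} :
      OEC P V →
      StepOM (P.plugT (Term.app (Term.lam x t) u)) (P.plugP ⟨t, [(x, u)]⟩)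

inductive StepOE : Program → Program → Prop
  | mk {P : PCtx} {V : Finset ℕ} {x : ℕ} {v : Term} :
      OEC P V → P.lookup x = some v → v.IsValue →
      StepOE (P.plugT (Term.var x)) (P.plugT v)

def StepOnd (p q : Program) : Prop := StepOM p q ∨ StepOE p q

/-! ## Open CbNeed normal programs -/

inductive PInert : Program → Prop
  | ax {i : Term} : i.Inert → PInert ⟨i, []⟩
  | inert {p : Program} {x : ℕ} {i : Term} :
      PInert p → x ∈ p.nv → i.Inert → PInert (p.appES x i)
  | gc {p : Program} {x : ℕ} (t : Term) :
      PInert p → x ∉ p.nv → PInert (p.appES x t)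

inductive PAbs : Program → Prop
  | ax {v : Term} : v.IsValue → PAbs ⟨v, []⟩
  | gc {p : Program} {x : ℕ} (t : Term) : PAbs p → PAbs (p.appES x t)

def ONorm (p : Program) : Prop := PInert p ∨ PAbs p

/-! ## Useful Open CbNeed: multiplicative and exponential evaluation contexts -/

def upd (S : Finset ℕ) (x y : ℕ) : Finset ℕ := if x ∈ S then (S.erase x) ∪ {y} else S

inductive MEC : PCtx → Finset ℕ → Finset ℕ → Prop
  | ax {H : HCtx} : H.WF → MEC (PCtx.tc H []) H.unv H.anv
  | var {P : PCtx} {U A : Finset ℕ} {x y : ℕ} :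
      MEC P U A → x ∈ U ∪ A → x ∉ P.dom →
      MEC (P.appES x (Term.var y)) (upd U x y) (upd A x y)
  | gc {P : PCtx} {U A : Finset ℕ} {x : ℕ} (t : Term) :
      MEC P U A → x ∉ U ∪ A → x ∉ P.dom → MEC (P.appES x t) U A
  | inert {P : PCtx} {U A : Finset ℕ} {x : ℕ} {i : Term} :
      MEC P U A → x ∈ U ∪ A → i.InertPlus → x ∉ P.dom →
      MEC (P.appES x i) ((U.erase x) ∪ i.unv) ((A.erase x) ∪ i.anv)
  | val {P : PCtx} {U A : Finset ℕ} {x : ℕ} {v : Term} :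
      MEC P U A → x ∈ U → x ∉ A → v.IsValue → x ∉ P.dom →
      MEC (P.appES x v) (U.erase x) A
  | her {P : PCtx} {U A : Finset ℕ} {x : ℕ} {H : HCtx} :
      MEC P U A → x ∉ U ∪ A → x ∉ P.dom → H.WF →
      MEC (P.hered x H) (U ∪ H.unv) (A ∪ H.anv)

/-- Exponential evaluation contexts P ∈ E@_{U,A}; the last (natural number) index
counts the number of applications of rule (e_NA) in the derivation. -/
inductive EEC : PCtx → Finset ℕ → Finset ℕ → ℕ → Prop
  | ax1 {H : HCtx} : H.IsApp → EEC (PCtx.tc H []) H.unv H.anv 0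
  | ax2 {P : PCtx} {U A : Finset ℕ} {x : ℕ} {H : HCtx} :
      MEC P U A → x ∉ U ∪ A → x ∉ P.dom → H.IsApp →
      EEC (P.hered x H) ((U.erase x) ∪ H.unv) (A ∪ H.anv) 0
  | var {P : PCtx} {U A : Finset ℕ} {k : ℕ} {x y : ℕ} :
      EEC P U A k → x ∈ U ∪ A → x ∉ P.dom →
      EEC (P.appES x (Term.var y)) (upd U x y) (upd A x y) k
  | inert {P : PCtx} {U A : Finset ℕ} {k : ℕ} {x : ℕ} {i : Term} :
      EEC P U A k → x ∈ U ∪ A → i.InertPlus → x ∉ P.dom →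
      EEC (P.appES x i) ((U.erase x) ∪ i.unv) ((A.erase x) ∪ i.anv) k
  | gc {P : PCtx} {U A : Finset ℕ} {k : ℕ} {x : ℕ} (t : Term) :
      EEC P U A k → x ∉ U ∪ A → x ∉ P.dom → EEC (P.appES x t) U A k
  | val {P : PCtx} {U A : Finset ℕ} {k : ℕ} {x : ℕ} {v : Term} :
      EEC P U A k → x ∈ U → x ∉ A → v.IsValue → x ∉ P.dom →
      EEC (P.appES x v) (U.erase x) A k
  | na {P : PCtx} {U A : Finset ℕ} {k : ℕ} {x : ℕ} :
      EEC P U A k → x ∉ A → x ∉ P.dom →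
      EEC (P.hered x HCtx.hole) (U.erase x) A (k + 1)

/-! ## Useful Open CbNeed reduction -/

inductive StepUM : Program → Program → Prop
  | mk {P : PCtx} {U A : Finset ℕ} {x : ℕ} {t u : Term} :
      MEC P U A →
      StepUM (P.plugT (Term.app (Term.lam x t) u)) (P.plugP ⟨t, [(x, u)]⟩)

inductive StepUE : Program → Program → Prop
  | mk {P : PCtx} {U A : Finset ℕ} {k : ℕ} {x : ℕ} {v : Term} :
      EEC P U A k → P.lookup x = some v → v.IsValue →
      StepUE (P.plugT (Term.var x)) (P.plugT v)

def StepUnd (p q : Program) : Prop := StepUM p q ∨ StepUE p q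

/-- Useful multiplicative steps whose evaluation context lies in Em_{U,A}. -/
def StepUMat (U A : Finset ℕ) (p q : Program) : Prop :=
  ∃ (P : PCtx) (x : ℕ) (t u : Term), MEC P U A ∧
    p = P.plugT (Term.app (Term.lam x t) u) ∧ q = P.plugP ⟨t, [(x, u)]⟩

/-- Useful exponential steps whose evaluation context lies in E@_{U,A}. -/
def StepUEat (U A : Finset ℕ) (p q : Program) : Prop :=
  ∃ (P : PCtx) (k : ℕ) (x : ℕ) (v : Term), EEC P U A k ∧
    P.lookup x = some v ∧ v.IsValue ∧
    p = P.plugT (Term.var x) ∧ q = P.plugT v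

/-! ## Useful normal-form predicates -/

inductive GenVar : ℕ → Program → Prop
  | ax (x : ℕ) : GenVar x ⟨Term.var x, []⟩
  | her {x : ℕ} {p : Program} (y : ℕ) : GenVar x p → GenVar y (p.appES x (Term.var y))
  | gc {x z : ℕ} {p : Program} (t : Term) : GenVar x p → z ≠ x → GenVar x (p.appES z t)

inductive UfAbs : Program → Prop
  | ax {v : Term} : v.IsValue → UfAbs ⟨v, []⟩
  | gv {p : Program} {x : ℕ} {v : Term} : GenVar x p → v.IsValue → UfAbs (p.appES x v)
  | gc {p : Program} {x : ℕ} (t : Term) : UfAbs p → UfAbs (p.appES x t)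

inductive UfInert : Program → Prop
  | ax {i : Term} : i.InertPlus → UfInert ⟨i, []⟩
  | gv {p : Program} {x : ℕ} {i : Term} : GenVar x p → i.InertPlus → UfInert (p.appES x i)
  | inert {p : Program} {x : ℕ} {i : Term} :
      UfInert p → x ∈ p.nv → i.Inert → UfInert (p.appES x i)
  | useless {p : Program} {x : ℕ} {v : Term} :
      UfInert p → x ∈ p.unv → x ∉ p.anv → v.IsValue → UfInert (p.appES x v)
  | gc {p : Program} {x : ℕ} (t : Term) : UfInert p → x ∉ p.nv → UfInert (p.appES x t)

def UfNorm (p : Program) : Prop := UfInert p ∨ UfAbs p ∨ ∃ x, GenVar x p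

/-! ## The size-exploding family -/

/-- t₁ := λx.λy. y x x  (x := 0, y := 1). -/
def t1 : Term := Term.lam 0 (Term.lam 1 (Term.app (Term.app (Term.var 1) (Term.var 0)) (Term.var 0)))

/-- λy. y x x. -/
def tbody : Term := Term.lam 1 (Term.app (Term.app (Term.var 1) (Term.var 0)) (Term.var 0))

/-- The family t_n (values for n ≥ 1; tfam 0 is a dummy). -/
def tfam : ℕ → Term
  | 0 => t1
  | 1 => t1
  | n + 2 => Term.lam 0 (Term.app (tfam (n + 1)) tbody)

/-- I := λz.z. -/
def Idt : Term := Term.lam 2 (Term.var 2)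

/-- The family u_n : u₀ = I, u_{n+1} = λy. y u_n u_n. -/
def ufam : ℕ → Term
  | 0 => Idt
  | n + 1 => Term.lam 1 (Term.app (Term.app (Term.var 1) (ufam n)) (ufam n))

theorem Term.subst_var_self (x : ℕ) (u : Term) : Term.subst x u (Term.var x) = u :=
  if_pos rfl

theorem Term.subst_var_of_ne {x y : ℕ} (h : y ≠ x) (u : Term) :
    Term.subst x u (Term.var y) = Term.var y :=
  if_neg h

-- `Term.subst` may capture variables, but renaming a bound variable to avoid capture would still
-- leave an abstraction, so being a value is insensitive to this.
theorem Term.IsValue.subst {t : Term} (ht : t.IsValue) (x : ℕ) (u : Term) :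
    (Term.subst x u t).IsValue := by
  obtain ⟨y, s, rfl⟩ := ht
  by_cases hyx : y = x
  · exact ⟨y, s, if_pos hyx⟩
  · exact ⟨y, Term.subst x u s, if_neg hyx⟩

theorem Program.unf_appES (p : Program) (x : ℕ) (u : Term) :
    (p.appES x u).unf = Term.subst x u p.unf :=
  List.foldl_concat _ _ _ _

theorem GenVar.unf_eq_var {x : ℕ} {p : Program} (h : GenVar x p) : p.unf = Term.var x := by
  induction h with
  | ax x => rfl
  | her y _ ih => rw [Program.unf_appES, ih, Term.subst_var_self]
  | gc t _ hzx ih => rw [Program.unf_appES, ih, Term.subst_var_of_ne hzx.symm]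

/-- unfolding of useful abstractions. -/
theorem ufabs_unfolds_to_value :
    ∀ p : Program, UfAbs p → p.unf.IsValue := by
  intro p hp
  induction hp with
  | ax hv => exact hv
  | gv hx hv => rwa [Program.unf_appES, hx.unf_eq_var, Term.subst_var_self]
  | gc t _ ih =>
    rw [Program.unf_appES]
    exact ih.subst _ t
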